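/- Let Y be a closed subspace of c₀(ℤⁿ) all of whose elements are Fourier coefficient sequences of L¹(𝕋ⁿ) functions. Then there is a positive integer α and a constant C, independent of F ∈ Y, such that ‖F‖_∞ ≤ C · sup{|F(ξ)| : ξ ∈ ℤⁿ, |ξ| ≤ α}. -/

import Mathlib

open MeasureTheory ZeroAtInfty

/-- The fundamental cube `[-π,π)ⁿ` for the torus `𝕋ⁿ`. -/
def torusCube (n : ℕ) : Set (EuclideanSpace ℝ (Fin n)) :=
  {x | ∀ k, x k ∈ Set.Ico (-Real.pi) Real.pi}

/-- The `ξ`-th Fourier coefficient of a function on the torus `𝕋ⁿ`,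
`𝓕f(ξ) = ∫_{𝕋ⁿ} e^{-i⟨x,ξ⟩} f(x) dx`. -/
noncomputable def torusFourierCoeff {n : ℕ} (f : EuclideanSpace ℝ (Fin n) → ℂ)
    (ξ : Fin n → ℤ) : ℂ :=
  ∫ x in torusCube n,
    Complex.exp (-(Complex.I * (∑ k, x k * (ξ k : ℝ) : ℝ))) * f x

/-!
Since Fourier coefficients determine an integrable function, the closed graph theorem makes the
inverse Fourier transform a bounded operator `T : Y → L¹`, and `‖F‖ ≤ ‖T F‖` because each Fourier
coefficient is a contraction on `L¹`. If no finite set of frequencies controlled the norm of `Y`, a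
gliding hump would produce, for every `N`, unit vectors `F₁, …, F_N` in `Y` that are almost
disjointly supported, so that `‖∑ ± F_j‖ ≤ 2` for all signs. By Khinchine's inequality `L¹` has
cotype 2, hence the average over the signs of `‖∑ ± T F_j‖` is at least a constant multiple of
`√N`, which contradicts the boundedness of `T` for large `N`.
-/

open scoped BigOperators BoundedContinuousFunction NNReal Topology

section SignedSums

variable {ι : Type*} [Fintype ι] [DecidableEq ι]

lemma expect_add_sign_zsmul {M : Type*} [AddCommGroup M] (φ : M → ℝ) {i : ι}
    {X : (ι → ℤˣ) → M} (hX : ∀ ε, X (Pi.mulSingle i (-1) * ε) = X ε) (a : M) :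
    𝔼 ε, φ (X ε + (ε i : ℤ) • a) = 𝔼 ε, (φ (X ε + a) + φ (X ε - a)) / 2 := by
  have flip : 𝔼 ε, φ (X ε + (ε i : ℤ) • a) = 𝔼 ε, φ (X ε - (ε i : ℤ) • a) :=
    (Fintype.expect_equiv (Equiv.mulLeft (Pi.mulSingle i (-1))) _ _ fun ε => by
      simp [hX, sub_eq_add_neg]).symm
  have pair (ε : ι → ℤˣ) : φ (X ε + (ε i : ℤ) • a) + φ (X ε - (ε i : ℤ) • a)
      = φ (X ε + a) + φ (X ε - a) := by
    rcases Int.units_eq_one_or (ε i) with h | h <;> simp [h, sub_eq_add_neg, add_comm]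
  simp_rw [← Finset.expect_div, ← pair, Finset.expect_add_distrib, ← flip, add_self_div_two]

lemma expect_sum_insert_sign_zsmul {M : Type*} [AddCommGroup M] (φ : M → ℝ) (a : ι → M)
    {s : Finset ι} {i : ι} (hi : i ∉ s) :
    𝔼 ε : ι → ℤˣ, φ (∑ j ∈ insert i s, (ε j : ℤ) • a j)
      = 𝔼 ε : ι → ℤˣ, (φ (∑ j ∈ s, (ε j : ℤ) • a j + a i)
          + φ (∑ j ∈ s, (ε j : ℤ) • a j - a i)) / 2 := by
  have independent (ε : ι → ℤˣ) :
      ∑ j ∈ s, ((Pi.mulSingle i (-1) * ε : ι → ℤˣ) j : ℤ) • a j = ∑ j ∈ s, (ε j : ℤ) • a j :=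
    Finset.sum_congr rfl fun j hj => by
      simp [Pi.mulSingle_eq_of_ne (ne_of_mem_of_not_mem hj hi)]
  simp_rw [Finset.sum_insert hi, add_comm ((_ : ℤ) • a i)]
  exact expect_add_sign_zsmul φ independent (a i)

variable {H : Type*} [NormedAddCommGroup H] [InnerProductSpace ℝ H]

theorem expect_norm_sum_sign_zsmul_sq (a : ι → H) (s : Finset ι) :
    𝔼 ε : ι → ℤˣ, ‖∑ i ∈ s, (ε i : ℤ) • a i‖ ^ 2 = ∑ i ∈ s, ‖a i‖ ^ 2 := by
  induction s using Finset.induction_on with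
  | empty => simp
  | insert i s hi ih =>
    have parallelogram (x : H) : (‖x + a i‖ ^ 2 + ‖x - a i‖ ^ 2) / 2 = ‖x‖ ^ 2 + ‖a i‖ ^ 2 := by
      linear_combination parallelogram_law_with_norm ℝ x (a i) / 2
    rw [expect_sum_insert_sign_zsmul (fun x => ‖x‖ ^ 2) a hi]
    simp_rw [parallelogram, Finset.expect_add_distrib, Fintype.expect_const, ih,
      Finset.sum_insert hi, add_comm]

lemma half_norm_add_pow_four_add_norm_sub_pow_four_le (x y : H) :
    (‖x + y‖ ^ 4 + ‖x - y‖ ^ 4) / 2 ≤ ‖x‖ ^ 4 + 6 * ‖y‖ ^ 2 * ‖x‖ ^ 2 + ‖y‖ ^ 4 := by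
  have cauchy_schwarz : inner ℝ x y ^ 2 ≤ ‖x‖ ^ 2 * ‖y‖ ^ 2 := by
    rw [← mul_pow]
    exact sq_le_sq' (neg_le_of_abs_le (abs_real_inner_le_norm x y)) (real_inner_le_norm x y)
  calc (‖x + y‖ ^ 4 + ‖x - y‖ ^ 4) / 2
      = ((‖x + y‖ ^ 2) ^ 2 + (‖x - y‖ ^ 2) ^ 2) / 2 := by ring
    _ = ‖x‖ ^ 4 + 2 * ‖y‖ ^ 2 * ‖x‖ ^ 2 + ‖y‖ ^ 4 + 4 * inner ℝ x y ^ 2 := by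
      rw [norm_add_sq_real, norm_sub_sq_real]; ring
    _ ≤ ‖x‖ ^ 4 + 6 * ‖y‖ ^ 2 * ‖x‖ ^ 2 + ‖y‖ ^ 4 := by linarith

theorem expect_norm_sum_sign_zsmul_pow_four_le (a : ι → H) (s : Finset ι) :
    𝔼 ε : ι → ℤˣ, ‖∑ i ∈ s, (ε i : ℤ) • a i‖ ^ 4 ≤ 3 * (∑ i ∈ s, ‖a i‖ ^ 2) ^ 2 := by
  induction s using Finset.induction_on with
  | empty => simp
  | insert i s hi ih =>
    rw [expect_sum_insert_sign_zsmul (fun x => ‖x‖ ^ 4) a hi, Finset.sum_insert hi]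
    calc _ ≤ 𝔼 ε : ι → ℤˣ, (‖∑ j ∈ s, (ε j : ℤ) • a j‖ ^ 4
            + 6 * ‖a i‖ ^ 2 * ‖∑ j ∈ s, (ε j : ℤ) • a j‖ ^ 2 + ‖a i‖ ^ 4) :=
          Finset.expect_le_expect fun ε _ => half_norm_add_pow_four_add_norm_sub_pow_four_le _ _
      _ = 𝔼 ε : ι → ℤˣ, ‖∑ j ∈ s, (ε j : ℤ) • a j‖ ^ 4
            + 6 * ‖a i‖ ^ 2 * ∑ j ∈ s, ‖a j‖ ^ 2 + ‖a i‖ ^ 4 := by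
          rw [Finset.expect_add_distrib, Finset.expect_add_distrib, ← Finset.mul_expect,
            expect_norm_sum_sign_zsmul_sq, Fintype.expect_const]
      _ ≤ 3 * (‖a i‖ ^ 2 + ∑ j ∈ s, ‖a j‖ ^ 2) ^ 2 := by
          linarith [pow_nonneg (norm_nonneg (a i)) 4]

-- AM-GM for `l * t`, `l * t` and `t ^ 4 / l ^ 2`, cleared of denominators.
lemma three_mul_sq_mul_sq_le_two_mul_pow_three_mul_add_pow_four {l t : ℝ} (hl : 0 ≤ l)
    (ht : 0 ≤ t) : 3 * l ^ 2 * t ^ 2 ≤ 2 * l ^ 3 * t + t ^ 4 := by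
  have : 0 ≤ t * (t - l) ^ 2 * (t + 2 * l) := by positivity
  linarith

theorem sqrt_sum_norm_sq_le_expect_norm_sum_sign_zsmul (a : ι → H) (s : Finset ι) :
    √(∑ i ∈ s, ‖a i‖ ^ 2) ≤ √3 * 𝔼 ε : ι → ℤˣ, ‖∑ i ∈ s, (ε i : ℤ) • a i‖ := by
  have second := expect_norm_sum_sign_zsmul_sq a s
  have fourth := expect_norm_sum_sign_zsmul_pow_four_le a s
  set A := ∑ i ∈ s, ‖a i‖ ^ 2
  set m := 𝔼 ε : ι → ℤˣ, ‖∑ i ∈ s, (ε i : ℤ) • a i‖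
  have hA : 0 ≤ A := Finset.sum_nonneg fun i _ => sq_nonneg _
  set l := √3 * √A
  have hl0 : 0 ≤ l := by positivity
  have hl2 : l ^ 2 = 3 * A := by rw [mul_pow, Real.sq_sqrt hA, Real.sq_sqrt (by norm_num)]
  have moment_ineq : 3 * l ^ 2 * A ≤ 2 * l ^ 3 * m + 3 * A ^ 2 :=
    calc 3 * l ^ 2 * A
        = 𝔼 ε : ι → ℤˣ, 3 * l ^ 2 * ‖∑ i ∈ s, (ε i : ℤ) • a i‖ ^ 2 := by
          rw [← Finset.mul_expect, second]
      _ ≤ 𝔼 ε : ι → ℤˣ, (2 * l ^ 3 * ‖∑ i ∈ s, (ε i : ℤ) • a i‖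
            + ‖∑ i ∈ s, (ε i : ℤ) • a i‖ ^ 4) :=
          Finset.expect_le_expect fun ε _ =>
            three_mul_sq_mul_sq_le_two_mul_pow_three_mul_add_pow_four hl0 (norm_nonneg _)
      _ ≤ 2 * l ^ 3 * m + 3 * A ^ 2 := by
          rw [Finset.expect_add_distrib, ← Finset.mul_expect]
          gcongr
  rcases hA.eq_or_lt with hA0 | hApos
  · rw [← hA0, Real.sqrt_zero]
    exact mul_nonneg (Real.sqrt_nonneg _) (Finset.expect_nonneg fun ε _ => norm_nonneg _)
  · have le_mul : A * (6 * A) ≤ l * m * (6 * A) := by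
      have : l ^ 3 = 3 * A * l := by rw [pow_succ, hl2]
      rw [hl2, this] at moment_ineq
      linarith
    have sqrt_le_mul : √A * √A ≤ √3 * m * √A := by
      rw [Real.mul_self_sqrt hA]
      linarith [le_of_mul_le_mul_right le_mul (by positivity)]
    exact le_of_mul_le_mul_right sqrt_le_mul (Real.sqrt_pos.2 hApos)

end SignedSums

/-- Rademacher cotype 2 with constant `C`, in its `L¹`-average form; the signs range over `ℤˣ`, so
that no scalar field needs to be chosen. -/
def HasCotypeTwo (Z : Type*) [NormedAddCommGroup Z] (C : ℝ≥0) : Prop :=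
  ∀ (N : ℕ) (z : Fin N → Z),
    √(∑ i, ‖z i‖ ^ 2) ≤ C * 𝔼 ε : Fin N → ℤˣ, ‖∑ i, (ε i : ℤ) • z i‖

theorem hasCotypeTwo_of_innerProductSpace (H : Type*) [NormedAddCommGroup H]
    [InnerProductSpace ℝ H] : HasCotypeTwo H (NNReal.sqrt 3) := fun N z => by
  simpa using sqrt_sum_norm_sq_le_expect_norm_sum_sign_zsmul z Finset.univ

section L1

variable {X E : Type*} [MeasurableSpace X] {μ : Measure X} [NormedAddCommGroup E]

theorem sqrt_sum_integral_sq_le_integral_sqrt_sum_sq {ι : Type*} [Fintype ι] {f : ι → X → ℝ}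
    (hf : ∀ i, Integrable (f i) μ) :
    √(∑ i, (∫ x, f i x ∂μ) ^ 2) ≤ ∫ x, √(∑ i, f i x ^ 2) ∂μ := by
  have coord (i : ι) : (∫ x, WithLp.toLp 2 (fun i => f i x) ∂μ) i = ∫ x, f i x ∂μ :=
    eval_integral_piLp (q := 2) (f := fun x => WithLp.toLp 2 fun i => f i x) hf i
  have h := norm_integral_le_integral_norm (μ := μ) fun x => WithLp.toLp 2 fun i => f i x
  simpa only [EuclideanSpace.norm_eq, coord, Real.norm_eq_abs, sq_abs] using h

lemma norm_sum_sign_zsmul_lp_one {ι : Type*} [Fintype ι] (f : ι → Lp E 1 μ) (ε : ι → ℤˣ) :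
    ‖∑ i, (ε i : ℤ) • f i‖ = ∫ x, ‖∑ i, (ε i : ℤ) • f i x‖ ∂μ := by
  have coe_smul (i : ι) : ⇑((ε i : ℤ) • f i) =ᵐ[μ] fun x => (ε i : ℤ) • f i x := by
    rcases Int.units_eq_one_or (ε i) with h | h
    · simp [h]
    · simp only [h, Units.val_neg, Units.val_one, neg_smul, one_smul]
      exact Lp.coeFn_neg (f i)
  rw [L1.norm_eq_integral_norm]
  refine integral_congr_ae ?_
  filter_upwards [Lp.coeFn_finsetSum Finset.univ fun i => (ε i : ℤ) • f i,
    ae_all_iff.2 coe_smul] with x hsum hsmul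
  simp only [hsum, Finset.sum_apply, hsmul]

theorem HasCotypeTwo.lp_one {C : ℝ≥0} (hE : HasCotypeTwo E C) :
    HasCotypeTwo (Lp E 1 μ) C := fun N f => by
  have integrable_sum (ε : Fin N → ℤˣ) : Integrable (fun x => ∑ i, (ε i : ℤ) • f i x) μ :=
    integrable_finsetSum _ fun i _ => by
      rcases Int.units_eq_one_or (ε i) with h | h <;>
        simpa [h] using L1.integrable_coeFn (f i)
  have integrable_expect :
      Integrable (fun x => 𝔼 ε : Fin N → ℤˣ, ‖∑ i, (ε i : ℤ) • f i x‖) μ := by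
    simp_rw [Fintype.expect_eq_sum_div_card]
    exact (integrable_finsetSum _ fun ε _ => (integrable_sum ε).norm).div_const _
  calc √(∑ i, ‖f i‖ ^ 2)
      ≤ ∫ x, √(∑ i, ‖f i x‖ ^ 2) ∂μ := by
        simp_rw [L1.norm_eq_integral_norm]
        exact sqrt_sum_integral_sq_le_integral_sqrt_sum_sq fun i =>
          (L1.integrable_coeFn (f i)).norm
    _ ≤ ∫ x, C * 𝔼 ε : Fin N → ℤˣ, ‖∑ i, (ε i : ℤ) • f i x‖ ∂μ :=
        integral_mono_of_nonneg (.of_forall fun x => Real.sqrt_nonneg _)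
          (integrable_expect.const_mul _) (.of_forall fun x => hE N fun i => f i x)
    _ = C * 𝔼 ε : Fin N → ℤˣ, ‖∑ i, (ε i : ℤ) • f i‖ := by
        simp_rw [norm_sum_sign_zsmul_lp_one, integral_const_mul,
          Fintype.expect_eq_sum_div_card, integral_div]
        rw [integral_finsetSum _ fun ε _ => (integrable_sum ε).norm]

end L1

section GlidingHump

variable {X E : Type*} [TopologicalSpace X] [NormedAddCommGroup E]

lemma norm_zeroAtInfty_le_iff {F : C₀(X, E)} {B : ℝ} (hB : 0 ≤ B) :
    ‖F‖ ≤ B ↔ ∀ x, ‖F x‖ ≤ B := by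
  rw [← ZeroAtInftyContinuousMap.norm_toBCF_eq_norm]
  exact BoundedContinuousFunction.norm_le hB

lemma norm_zeroAtInfty_apply_le (F : C₀(X, E)) (x : X) : ‖F x‖ ≤ ‖F‖ :=
  (norm_zeroAtInfty_le_iff (norm_nonneg F)).1 le_rfl x

lemma norm_zeroAtInfty_sum_sign_zsmul_le {ι : Type*} [Fintype ι] {F : ι → C₀(X, E)} {B : ℝ}
    (hB : 0 ≤ B) (hF : ∀ x, ∑ i, ‖F i x‖ ≤ B) (ε : ι → ℤˣ) : ‖∑ i, (ε i : ℤ) • F i‖ ≤ B := by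
  have norm_sign_zsmul (i : ι) (x : X) : ‖((ε i : ℤ) • F i) x‖ = ‖F i x‖ := by
    rcases Int.units_eq_one_or (ε i) with h | h <;> simp [h]
  refine (norm_zeroAtInfty_le_iff hB).2 fun x => ?_
  calc ‖(∑ i, (ε i : ℤ) • F i) x‖ = ‖∑ i, ((ε i : ℤ) • F i) x‖ :=
        congrArg norm (map_sum (AddMonoidHom.mk' (fun G : C₀(X, E) => G x) fun _ _ => rfl) _ _)
    _ ≤ ∑ i, ‖F i x‖ := by
        simpa only [norm_sign_zsmul] using norm_sum_le _ fun i => ((ε i : ℤ) • F i) x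
    _ ≤ B := hF x

lemma exists_isCompact_forall_notMem_sum_norm_le {ι : Type*} [Fintype ι] (F : ι → C₀(X, E))
    {δ : ℝ} (hδ : 0 < δ) : ∃ K, IsCompact K ∧ ∀ x ∉ K, ∑ i, ‖F i x‖ ≤ δ := by
  have tendsto_sum : Filter.Tendsto (fun x => ∑ i, ‖F i x‖) (Filter.cocompact X) (𝓝 0) := by
    simpa using tendsto_finsetSum Finset.univ fun i _ => (F i).zero_at_infty'.norm
  obtain ⟨K, hK, hKδ⟩ := Filter.mem_cocompact.1 (tendsto_sum.eventually (ge_mem_nhds hδ))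
  exact ⟨K, hK, fun x hx => hKδ hx⟩

theorem exists_fin_forall_sum_norm_le_one_add {S : Set C₀(X, E)} (hS1 : ∀ F ∈ S, ‖F‖ ≤ 1)
    (hS : ∀ K, IsCompact K → ∀ δ > 0, ∃ F ∈ S, ∀ x ∈ K, ‖F x‖ ≤ δ) (N : ℕ) :
    ∀ η > 0, ∃ F : Fin N → C₀(X, E), (∀ j, F j ∈ S) ∧ ∀ x, ∑ j, ‖F j x‖ ≤ 1 + η := by
  induction N with
  | zero =>
    exact fun η hη => ⟨Fin.elim0, fun j => j.elim0, fun x => by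
      simpa using add_nonneg zero_le_one hη.le⟩
  | succ N ih =>
    intro η hη
    obtain ⟨F, hFS, hF⟩ := ih (η / 2) (half_pos hη)
    obtain ⟨K, hK, hFK⟩ := exists_isCompact_forall_notMem_sum_norm_le F hη
    obtain ⟨G, hGS, hGK⟩ := hS K hK (η / 2) (half_pos hη)
    refine ⟨Fin.cons G F, Fin.cases hGS hFS, fun x => ?_⟩
    simp only [Fin.sum_univ_succ, Fin.cons_zero, Fin.cons_succ]
    by_cases hx : x ∈ K
    · linarith [hF x, hGK x hx]
    · linarith [hFK x hx, norm_zeroAtInfty_apply_le G x, hS1 G hGS]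

variable {𝕜 Z : Type*} [RCLike 𝕜] [NormedSpace 𝕜 E] [NormedAddCommGroup Z] [NormedSpace 𝕜 Z]

lemma sqrt_natCast_le_of_forall_sum_norm_le {Y : Submodule 𝕜 C₀(X, E)} (T : Y →L[𝕜] Z)
    {c C : ℝ≥0} (hT : AntilipschitzWith c T) (hZ : HasCotypeTwo Z C) {N : ℕ} (F : Fin N → Y)
    (hF1 : ∀ j, ‖F j‖ = 1) {B : ℝ} (hB : 0 ≤ B)
    (hF : ∀ x, ∑ j, ‖(F j : C₀(X, E)) x‖ ≤ B) : √N ≤ c * (C * (‖T‖ * B)) := by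
  have lower (j : Fin N) : 1 ≤ c * ‖T (F j)‖ := by
    rw [← hF1 j]
    exact T.bound_of_antilipschitz hT (F j)
  have upper (ε : Fin N → ℤˣ) : ‖∑ j, (ε j : ℤ) • T (F j)‖ ≤ ‖T‖ * B := by
    rw [show ∑ j, (ε j : ℤ) • T (F j) = T (∑ j, (ε j : ℤ) • F j) by simp]
    refine T.le_opNorm_of_le ?_
    simpa using norm_zeroAtInfty_sum_sign_zsmul_le hB hF ε
  calc √N = √(∑ j : Fin N, 1 ^ 2) := by simp
    _ ≤ √(∑ j, (c * ‖T (F j)‖) ^ 2) := by gcongr with j; exact lower j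
    _ = c * √(∑ j, ‖T (F j)‖ ^ 2) := by
        simp_rw [mul_pow, ← Finset.mul_sum]
        rw [Real.sqrt_mul (by positivity), Real.sqrt_sq c.coe_nonneg]
    _ ≤ c * (C * 𝔼 ε : Fin N → ℤˣ, ‖∑ j, (ε j : ℤ) • T (F j)‖) := by
        gcongr
        exact hZ N fun j => T (F j)
    _ ≤ c * (C * (‖T‖ * B)) := by
        gcongr
        exact Finset.expect_le Finset.univ_nonempty fun ε _ => upper ε

theorem exists_isCompact_forall_exists_mem_norm_le (Y : Submodule 𝕜 C₀(X, E)) (T : Y →L[𝕜] Z)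
    {c C : ℝ≥0} (hT : AntilipschitzWith c T) (hZ : HasCotypeTwo Z C) :
    ∃ K, IsCompact K ∧ ∃ δ > 0, ∀ F ∈ Y, F ≠ 0 → ∃ x ∈ K, δ * ‖F‖ ≤ ‖F x‖ := by
  by_contra! hcon
  have small_on_compact (K : Set X) (hK : IsCompact K) (δ : ℝ) (hδ : 0 < δ) :
      ∃ F ∈ {F : C₀(X, E) | F ∈ Y ∧ ‖F‖ = 1}, ∀ x ∈ K, ‖F x‖ ≤ δ := by
    obtain ⟨F, hFY, hF0, hF⟩ := hcon K hK δ hδ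
    refine ⟨(‖F‖⁻¹ : 𝕜) • F, ⟨Y.smul_mem _ hFY, norm_smul_inv_norm hF0⟩, fun x hx => ?_⟩
    have : ‖F‖⁻¹ * ‖F x‖ ≤ δ := (inv_mul_le_iff₀' (norm_pos_iff.2 hF0)).2 (hF x hx).le
    simpa [norm_smul] using this
  have bounded (N : ℕ) : √N ≤ c * (C * (‖T‖ * (1 + 1))) := by
    obtain ⟨F, hFS, hF⟩ := exists_fin_forall_sum_norm_le_one_add (fun F hF => hF.2.le)
      small_on_compact N 1 one_pos
    exact sqrt_natCast_le_of_forall_sum_norm_le T hT hZ (fun j => ⟨F j, (hFS j).1⟩)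
      (fun j => (hFS j).2) (by norm_num) hF
  obtain ⟨N, hN⟩ := exists_nat_gt ((c * (C * (‖T‖ * (1 + 1))) : ℝ) ^ 2)
  exact (Real.lt_sqrt_of_sq_lt hN).not_ge (bounded N)

end GlidingHump

theorem exists_continuousLinearMap_comp_eq_of_range_subset {𝕜 Y L W : Type*}
    [NontriviallyNormedField 𝕜] [NormedAddCommGroup Y] [NormedSpace 𝕜 Y] [CompleteSpace Y]
    [NormedAddCommGroup L] [NormedSpace 𝕜 L] [CompleteSpace L] [TopologicalSpace W] [T2Space W]
    [AddCommGroup W] [Module 𝕜 W] {A : L →L[𝕜] W} (hA : Function.Injective A) {J : Y →L[𝕜] W}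
    (hJ : Set.range J ⊆ Set.range A) : ∃ T : Y →L[𝕜] L, A ∘L T = J := by
  choose t ht using Set.range_subset_iff.1 hJ
  let T : Y →ₗ[𝕜] L :=
    { toFun := t
      map_add' := fun y z => hA (by simp only [map_add, ht])
      map_smul' := fun c y => hA (by simp only [map_smul, ht, RingHom.id_apply]) }
  have graph_eq : (T.graph : Set (Y × L)) = {p | A p.2 = J p.1} := by
    ext ⟨y, l⟩
    simp only [SetLike.mem_coe, LinearMap.mem_graph_iff, Set.mem_ofPred_eq]
    exact ⟨fun h => h ▸ ht y, fun h => hA (h.trans (ht y).symm)⟩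
  have isClosed_graph : IsClosed (T.graph : Set (Y × L)) := by
    rw [graph_eq]
    exact isClosed_eq (by fun_prop) (by fun_prop)
  exact ⟨.ofIsClosedGraph isClosed_graph, ContinuousLinearMap.ext ht⟩

section FourierUniqueness

variable {X E : Type*} [MeasurableSpace X] {μ : Measure X} [NormedAddCommGroup E]

theorem ae_eq_zero_of_forall_integral_boundedContinuous_smul_eq_zero [TopologicalSpace X]
    [BorelSpace X] [HasOuterApproxClosed X] [NormedSpace ℝ E] [CompleteSpace E] {h : X → E}
    (hh : Integrable h μ) (h0 : ∀ g : X →ᵇ ℝ≥0, ∫ x, (g x : ℝ) • h x ∂μ = 0) : h =ᵐ[μ] 0 := by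
  refine ae_eq_zero_of_forall_setIntegral_isClosed_eq_zero hh fun K hK => ?_
  have pointwise (x : X) : Filter.Tendsto (fun j => (hK.apprSeq j x : ℝ) • h x) Filter.atTop
      (𝓝 (K.indicator h x)) := by
    have appr := (tendsto_pi_nhds.1 (HasOuterApproxClosed.tendsto_apprSeq hK) x)
    have indicator_eq : K.indicator h x = ((K.indicator (fun _ => 1) x : ℝ≥0) : ℝ) • h x := by
      by_cases hx : x ∈ K <;> simp [hx]
    rw [indicator_eq]
    exact ((NNReal.continuous_coe.tendsto _).comp appr).smul_const (h x)
  have limit : Filter.Tendsto (fun j => ∫ x, (hK.apprSeq j x : ℝ) • h x ∂μ) Filter.atTop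
      (𝓝 (∫ x, K.indicator h x ∂μ)) := by
    refine tendsto_integral_of_dominated_convergence (fun x => ‖h x‖)
      (fun j => ?_) hh.norm (fun j => .of_forall fun x => ?_) (.of_forall pointwise)
    · exact (NNReal.continuous_coe.comp (hK.apprSeq j).continuous).aestronglyMeasurable.smul hh.1
    · rw [norm_smul, NNReal.norm_eq]
      exact mul_le_of_le_one_left (norm_nonneg _)
        (HasOuterApproxClosed.apprSeq_apply_le_one hK j x)
  rw [← integral_indicator hK.measurableSet]
  exact tendsto_nhds_unique limit (by simp only [h0, tendsto_const_nhds])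

variable [NormedSpace ℂ E]

lemma integral_continuousMap_smul_eq_zero_of_dense_span [TopologicalSpace X] [CompactSpace X]
    [BorelSpace X] {h : X → E} (hh : Integrable h μ) {S : Set C(X, ℂ)}
    (hS : Dense (Submodule.span ℂ S : Set C(X, ℂ))) (h0 : ∀ g ∈ S, ∫ x, g x • h x ∂μ = 0)
    (g : C(X, ℂ)) : ∫ x, g x • h x ∂μ = 0 := by
  have integrable_smul (g : C(X, ℂ)) : Integrable (fun x => g x • h x) μ :=
    hh.bdd_smul ‖g‖ g.continuous.aestronglyMeasurable (.of_forall g.norm_coe_le_norm)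
  let L : C(X, ℂ) →L[ℂ] E := LinearMap.mkContinuous
    { toFun := fun g => ∫ x, g x • h x ∂μ
      map_add' := fun g₁ g₂ => by
        simp only [ContinuousMap.add_apply, add_smul]
        exact integral_add (integrable_smul g₁) (integrable_smul g₂)
      map_smul' := fun c g => by
        simp only [ContinuousMap.smul_apply, smul_assoc, RingHom.id_apply, integral_smul] }
    (∫ x, ‖h x‖ ∂μ) fun g => by
      rw [mul_comm, ← integral_const_mul]
      refine norm_integral_le_of_norm_le (hh.norm.const_mul _) (.of_forall fun x => ?_)
      rw [norm_smul]
      gcongr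
      exact g.norm_coe_le_norm x
  have : L = 0 := ContinuousLinearMap.ext_on hS h0
  exact DFunLike.congr_fun this g

variable [CompleteSpace E] {d : Type*} [Fintype d]

theorem ae_eq_zero_of_forall_integral_mFourier_smul_eq_zero {ν : Measure (UnitAddTorus d)}
    {h : UnitAddTorus d → E} (hh : Integrable h ν)
    (h0 : ∀ m, ∫ t, UnitAddTorus.mFourier m t • h t ∂ν = 0) : h =ᵐ[ν] 0 := by
  refine ae_eq_zero_of_forall_integral_boundedContinuous_smul_eq_zero hh fun g => ?_
  let g' : C(UnitAddTorus d, ℂ) := ⟨fun t => ((g t : ℝ) : ℂ), by fun_prop⟩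
  have dense : Dense (Submodule.span ℂ (Set.range (UnitAddTorus.mFourier (d := d)))
      : Set C(UnitAddTorus d, ℂ)) :=
    Submodule.dense_iff_topologicalClosure_eq_top.2 UnitAddTorus.span_mFourier_closure_eq_top
  simpa [g'] using integral_continuousMap_smul_eq_zero_of_dense_span hh dense
    (Set.forall_mem_range.2 h0) g'

theorem ae_eq_zero_of_forall_integral_mFourier_comp_smul_eq_zero {π : X → UnitAddTorus d}
    (hπ : MeasurableEmbedding π) {h : X → E} (hh : Integrable h μ)
    (h0 : ∀ m, ∫ x, UnitAddTorus.mFourier m (π x) • h x ∂μ = 0) : h =ᵐ[μ] 0 := by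
  have extend_apply (x : X) : Function.extend π h 0 (π x) = h x := hπ.injective.extend_apply h 0 x
  have extend_ae_zero : Function.extend π h 0 =ᵐ[μ.map π] 0 := by
    refine ae_eq_zero_of_forall_integral_mFourier_smul_eq_zero ?_ fun m => ?_
    · rw [hπ.integrable_map_iff, Function.extend_comp hπ.injective]
      exact hh
    · rw [hπ.integral_map]
      simpa only [extend_apply] using h0 m
  filter_upwards [hπ.ae_map_iff.1 extend_ae_zero] with x hx
  rwa [extend_apply] at hx

end FourierUniqueness

section Torus

variable {n : ℕ}

/-- The quotient map `ℝⁿ → 𝕋ⁿ`, rescaled because Mathlib's torus has period `1` instead of `2π`. -/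
noncomputable def toTorus (n : ℕ) (x : EuclideanSpace ℝ (Fin n)) : UnitAddTorus (Fin n) :=
  fun k => ((x k / (2 * Real.pi) : ℝ) : UnitAddCircle)

lemma measurable_toTorus (n : ℕ) : Measurable (toTorus n) :=
  measurable_pi_lambda _ fun _ => AddCircle.measurable_mk'.comp (by fun_prop)

lemma injOn_toTorus (n : ℕ) : Set.InjOn (toTorus n) (torusCube n) := by
  intro x hx y hy hxy
  have rescale_mem {t : ℝ} (ht : t ∈ Set.Ico (-Real.pi) Real.pi) :
      t / (2 * Real.pi) ∈ Set.Ico (-(1 / 2) : ℝ) (-(1 / 2) + 1) := by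
    constructor
    · rw [le_div_iff₀ Real.two_pi_pos]; linarith [ht.1]
    · rw [div_lt_iff₀ Real.two_pi_pos]; linarith [ht.2]
  ext k
  have := (AddCircle.coe_eq_coe_iff_of_mem_Ico (rescale_mem (hx k)) (rescale_mem (hy k))).1
    (congrFun hxy k)
  exact (div_left_inj' Real.two_pi_pos.ne').1 this

lemma measurableSet_torusCube (n : ℕ) : MeasurableSet (torusCube n) := by
  simp only [torusCube, Set.ofPred_forall]
  exact .iInter fun k => measurableSet_Ico.preimage (by fun_prop)

lemma measurableEmbedding_toTorus_coe (n : ℕ) :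
    MeasurableEmbedding fun x : torusCube n => toTorus n x :=
  have : StandardBorelSpace (torusCube n) := (measurableSet_torusCube n).standardBorel
  ((measurable_toTorus n).comp measurable_subtype_coe).measurableEmbedding
    (Set.injOn_iff_injective.1 (injOn_toTorus n))

lemma mFourier_toTorus (m : Fin n → ℤ) (x : EuclideanSpace ℝ (Fin n)) :
    UnitAddTorus.mFourier m (toTorus n x)
      = Complex.exp (-(Complex.I * (∑ k, x k * ((-m) k : ℝ) : ℝ))) := by
  simp only [UnitAddTorus.mFourier, ContinuousMap.coe_mk, toTorus, fourier_coe_apply,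
    ← Complex.exp_sum]
  congr 1
  push_cast
  rw [Finset.mul_sum, ← Finset.sum_neg_distrib]
  refine Finset.sum_congr rfl fun k _ => ?_
  field_simp
  simp [mul_comm]

theorem ae_eq_zero_of_forall_torusFourierCoeff_eq_zero {f : EuclideanSpace ℝ (Fin n) → ℂ}
    (hf : IntegrableOn f (torusCube n)) (h0 : ∀ ξ, torusFourierCoeff f ξ = 0) :
    f =ᵐ[volume.restrict (torusCube n)] 0 := by
  have hcube := measurableSet_torusCube n
  refine (ae_restrict_iff_subtype hcube).2 ?_
  refine ae_eq_zero_of_forall_integral_mFourier_comp_smul_eq_zero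
    (measurableEmbedding_toTorus_coe n) (h := fun x : torusCube n => f x) ?_ fun m => ?_
  · exact (integrableOn_iff_comap_subtypeVal hcube).1 hf
  · simp only [mFourier_toTorus, smul_eq_mul]
    rw [integral_subtype_comap hcube fun x =>
      Complex.exp (-(Complex.I * (∑ k, x k * ((-m) k : ℝ) : ℝ))) * f x]
    exact h0 (-m)

lemma torusFourierCoeff_congr {f g : EuclideanSpace ℝ (Fin n) → ℂ}
    (h : f =ᵐ[volume.restrict (torusCube n)] g) (ξ : Fin n → ℤ) :
    torusFourierCoeff f ξ = torusFourierCoeff g ξ :=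
  integral_congr_ae (h.mono fun x hx => by simp only [hx])

lemma norm_exp_neg_I_mul (t : ℝ) : ‖Complex.exp (-(Complex.I * t))‖ = 1 := by
  simpa [mul_comm] using Complex.norm_exp_ofReal_mul_I (-t)

lemma torusFourierCoeff_add {f g : EuclideanSpace ℝ (Fin n) → ℂ}
    (hf : IntegrableOn f (torusCube n)) (hg : IntegrableOn g (torusCube n)) (ξ : Fin n → ℤ) :
    torusFourierCoeff (f + g) ξ = torusFourierCoeff f ξ + torusFourierCoeff g ξ := by
  have integrable_exp_mul {h : EuclideanSpace ℝ (Fin n) → ℂ}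
      (hh : IntegrableOn h (torusCube n) volume) :
      IntegrableOn (fun x => Complex.exp (-(Complex.I * (∑ k, x k * (ξ k : ℝ) : ℝ))) * h x)
        (torusCube n) :=
    Integrable.bdd_mul (c := 1) hh.integrable (by fun_prop)
      (.of_forall fun x => (norm_exp_neg_I_mul _).le)
  simp only [torusFourierCoeff, Pi.add_apply, mul_add]
  exact integral_add (integrable_exp_mul hf) (integrable_exp_mul hg)

lemma torusFourierCoeff_smul (c : ℂ) (f : EuclideanSpace ℝ (Fin n) → ℂ) (ξ : Fin n → ℤ) :
    torusFourierCoeff (c • f) ξ = c • torusFourierCoeff f ξ := by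
  simp only [torusFourierCoeff, Pi.smul_apply, mul_smul_comm, integral_smul]

lemma norm_torusFourierCoeff_le (f : EuclideanSpace ℝ (Fin n) → ℂ) (ξ : Fin n → ℤ) :
    ‖torusFourierCoeff f ξ‖ ≤ ∫ x in torusCube n, ‖f x‖ := by
  simpa only [torusFourierCoeff, norm_mul, norm_exp_neg_I_mul, one_mul] using
    norm_integral_le_integral_norm (μ := volume.restrict (torusCube n)) fun x =>
      Complex.exp (-(Complex.I * (∑ k, x k * (ξ k : ℝ) : ℝ))) * f x

/-- The Fourier transform `L¹(𝕋ⁿ) → ℂ^(ℤⁿ)`, with the product topology on the target. -/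
noncomputable def torusFourierL (n : ℕ) :
    Lp ℂ 1 (volume.restrict (torusCube n)) →L[ℂ] (Fin n → ℤ) → ℂ :=
  .pi fun ξ => LinearMap.mkContinuous
    { toFun := fun f => torusFourierCoeff f ξ
      map_add' := fun f g => by
        rw [torusFourierCoeff_congr (Lp.coeFn_add f g),
          torusFourierCoeff_add (L1.integrable_coeFn f) (L1.integrable_coeFn g)]
      map_smul' := fun c f => by
        rw [torusFourierCoeff_congr (Lp.coeFn_smul c f), torusFourierCoeff_smul,
          RingHom.id_apply] }
    1 fun f => by
      rw [one_mul, L1.norm_eq_integral_norm]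
      exact norm_torusFourierCoeff_le f ξ

lemma norm_torusFourierL_apply_le (f : Lp ℂ 1 (volume.restrict (torusCube n))) (ξ : Fin n → ℤ) :
    ‖torusFourierL n f ξ‖ ≤ ‖f‖ := by
  rw [L1.norm_eq_integral_norm]
  exact norm_torusFourierCoeff_le f ξ

lemma torusFourierL_toL1 {f : EuclideanSpace ℝ (Fin n) → ℂ} (hf : IntegrableOn f (torusCube n)) :
    torusFourierL n (hf.integrable.toL1) = torusFourierCoeff f :=
  funext (torusFourierCoeff_congr (Integrable.coeFn_toL1 hf))

theorem torusFourierL_injective (n : ℕ) : Function.Injective (torusFourierL n) := by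
  refine (injective_iff_map_eq_zero _).2 fun f hf => Lp.eq_zero_iff_ae_eq_zero.2 ?_
  exact ae_eq_zero_of_forall_torusFourierCoeff_eq_zero (L1.integrable_coeFn f) (congrFun hf)

end Torus

/-- The inclusion `C₀(X, E) → E^X`, with the product topology on the target. -/
noncomputable def zeroAtInftyCoeL (𝕜 X E : Type*) [TopologicalSpace X] [NormedAddCommGroup E]
    [NormedField 𝕜] [NormedSpace 𝕜 E] : C₀(X, E) →L[𝕜] X → E :=
  .pi fun x => LinearMap.mkContinuous
    { toFun := fun F => F x
      map_add' := fun _ _ => rfl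
      map_smul' := fun _ _ => rfl } 1 fun F => by
    rw [one_mul]
    exact norm_zeroAtInfty_apply_le F x

theorem exists_antilipschitzWith_of_torusFourierCoeff {n : ℕ} {Y : Subspace ℂ C₀(Fin n → ℤ, ℂ)}
    (hclosed : IsClosed (Y : Set C₀(Fin n → ℤ, ℂ)))
    (hsub : ∀ F ∈ Y, ∃ f : EuclideanSpace ℝ (Fin n) → ℂ,
      IntegrableOn f (torusCube n) ∧ ∀ ξ, F ξ = torusFourierCoeff f ξ) :
    ∃ T : Y →L[ℂ] Lp ℂ 1 (volume.restrict (torusCube n)), AntilipschitzWith 1 T := by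
  have : CompleteSpace Y := hclosed.completeSpace_coe
  obtain ⟨T, hT⟩ := exists_continuousLinearMap_comp_eq_of_range_subset (Y := Y)
    (torusFourierL_injective n) (J := zeroAtInftyCoeL ℂ (Fin n → ℤ) ℂ ∘L Y.subtypeL) <|
    Set.range_subset_iff.2 fun F => by
      obtain ⟨f, hf, hFf⟩ := hsub F F.2
      exact ⟨hf.integrable.toL1, (torusFourierL_toL1 hf).trans (funext hFf).symm⟩
  refine ⟨T, T.antilipschitz_of_bound fun F => ?_⟩
  rw [NNReal.coe_one, one_mul]
  refine (norm_zeroAtInfty_le_iff (norm_nonneg (T F))).2 fun ξ => ?_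
  have inversion : (F : C₀(Fin n → ℤ, ℂ)) ξ = torusFourierL n (T F) ξ :=
    congrFun (DFunLike.congr_fun hT.symm F) ξ
  exact inversion ▸ norm_torusFourierL_apply_le (T F) ξ

lemma exists_pos_forall_mem_abs_le {ι : Type*} [Finite ι] {K : Set (ι → ℤ)} (hK : IsCompact K) :
    ∃ α : ℕ, 0 < α ∧ ∀ ξ ∈ K, ∀ k, |ξ k| ≤ (α : ℤ) := by
  have := Fintype.ofFinite ι
  obtain ⟨R, hR⟩ := hK.isBounded.exists_norm_le
  obtain ⟨α, hα⟩ := exists_nat_gt (max R 0)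
  refine ⟨α, by exact_mod_cast (le_max_right R 0).trans_lt hα, fun ξ hξ k => ?_⟩
  have : ‖ξ k‖ ≤ α := (norm_le_pi_norm ξ k).trans ((hR ξ hξ).trans ((le_max_left R 0).trans hα.le))
  rw [Int.norm_eq_abs] at this
  exact_mod_cast this

/-- If `Y` is a closed subspace of `c₀(ℤⁿ)` consisting of Fourier coefficient
sequences of `L¹(𝕋ⁿ)` functions, then the sup norm on `Y` is controlled by the
sup over finitely many frequencies. -/
theorem norm_le_finite_sup_of_torus_fourier_range {n : ℕ}
    (Y : Subspace ℂ C₀(Fin n → ℤ, ℂ))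
    (hclosed : IsClosed (Y : Set C₀(Fin n → ℤ, ℂ)))
    (hsub : ∀ F ∈ Y, ∃ f : EuclideanSpace ℝ (Fin n) → ℂ,
      IntegrableOn f (torusCube n) ∧ ∀ ξ, F ξ = torusFourierCoeff f ξ) :
    ∃ α : ℕ, 0 < α ∧ ∃ C > (0 : ℝ), ∀ F ∈ Y,
      ‖F‖ ≤ C * ⨆ ξ : {ξ : Fin n → ℤ // ∀ k, |ξ k| ≤ (α : ℤ)}, ‖F ↑ξ‖ := by
  obtain ⟨T, hT⟩ := exists_antilipschitzWith_of_torusFourierCoeff hclosed hsub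
  obtain ⟨K, hK, δ, hδ, hKδ⟩ := exists_isCompact_forall_exists_mem_norm_le Y T hT
    (hasCotypeTwo_of_innerProductSpace ℂ).lp_one
  obtain ⟨α, hα, hKα⟩ := exists_pos_forall_mem_abs_le hK
  refine ⟨α, hα, δ⁻¹, inv_pos.2 hδ, fun F hF => ?_⟩
  rcases eq_or_ne F 0 with rfl | hF0
  · rw [norm_zero]
    exact mul_nonneg (inv_nonneg.2 hδ.le) (Real.iSup_nonneg fun _ => norm_nonneg _)
  obtain ⟨ξ, hξ, hFξ⟩ := hKδ F hF hF0
  have bddAbove : BddAbove (Set.range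
      fun ξ : {ξ : Fin n → ℤ // ∀ k, |ξ k| ≤ (α : ℤ)} => ‖F ↑ξ‖) :=
    ⟨‖F‖, Set.forall_mem_range.2 fun ξ => norm_zeroAtInfty_apply_le F ξ⟩
  exact (le_inv_mul_iff₀ hδ).2 (hFξ.trans (le_ciSup bddAbove ⟨ξ, hKα ξ hξ⟩))
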